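/- For every arrow α₀ ∈ Q₁, the element s_*λ_{α₀} of the quotient group Λ⁻ = ℤ^{Q₁}/r_*(ℤ^{Q₀}) is either zero or primitive, i.e. whenever s_*λ_{α₀} = n·μ with an integer n > 1 and μ ∈ Λ⁻, then s_*λ_{α₀} = 0. Consequently, if {α₀} ∈ Φ_θ (so that s_*λ_{α₀} ≠ 0), then s_*λ_{α₀} is the minimal lattice point on the ray σ⁻_{{α₀}}. -/

import Mathlib

/-- The quiver is connected: any two vertices are related by the equivalence
relation generated by "there is an arrow between them". -/
def QuiverConnected {Q₀ Q₁ : Type} (src tgt : Q₁ → Q₀) : Prop :=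
  ∀ i j : Q₀, Relation.EqvGen (fun i j => ∃ α : Q₁, src α = i ∧ tgt α = j) i j

/-- The indicator vector of a finite subset of the vertices. -/
def indVec {Q₀ : Type} [DecidableEq Q₀] (I' : Finset Q₀) : Q₀ → ℤ :=
  fun i => if i ∈ I' then 1 else 0

/-- A subset `J ⊆ Q₁` is `θ`-stable if `θ(𝟙_{I'}) > 0` for every nonempty proper
`I' ∈ S(J)`, where `S(J)` consists of the subsets `I' ⊆ Q₀` such that every arrow
`α ∈ J` with source in `I'` has target in `I'`. -/
def StableArrowSet {Q₀ Q₁ : Type} [Fintype Q₀] [DecidableEq Q₀] (src tgt : Q₁ → Q₀)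
    (θ : (Q₀ → ℤ) →ₗ[ℤ] ℤ) (J : Finset Q₁) : Prop :=
  ∀ I' : Finset Q₀, (∀ α ∈ J, src α ∈ I' → tgt α ∈ I') →
    I'.Nonempty → I' ≠ Finset.univ → 0 < θ (indVec I')

/-- `Φ_θ = {J ⊆ Q₁ : Q₁ ∖ J is θ-stable}`. -/
def PhiTheta {Q₀ Q₁ : Type} [Fintype Q₀] [DecidableEq Q₀] [Fintype Q₁] [DecidableEq Q₁]
    (src tgt : Q₁ → Q₀) (θ : (Q₀ → ℤ) →ₗ[ℤ] ℤ) : Set (Finset Q₁) :=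
  {J | StableArrowSet src tgt θ Jᶜ}


/-- The linear map `r_* : ℤ^{Q₀} → ℤ^{Q₁}`, `(r_*λ)_α = λ_{tgt α} − λ_{src α}`. -/
def rMapZ {Q₀ Q₁ : Type} (src tgt : Q₁ → Q₀) : (Q₀ → ℤ) →ₗ[ℤ] (Q₁ → ℤ) where
  toFun lam := fun α => lam (tgt α) - lam (src α)
  map_add' := by intro x y; funext α; simp; ring
  map_smul' := by intro c x; funext α; simp; ring

/-- `Λ⁻ = ℤ^{Q₁}/r_*(ℤ^{Q₀})`. -/
abbrev LamMinus {Q₀ Q₁ : Type} (src tgt : Q₁ → Q₀) : Type :=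
  (Q₁ → ℤ) ⧸ LinearMap.range (rMapZ src tgt)

/-- The quotient map `s_* : ℤ^{Q₁} → Λ⁻`. -/
def sMapZ {Q₀ Q₁ : Type} (src tgt : Q₁ → Q₀) :
    (Q₁ → ℤ) →ₗ[ℤ] LamMinus src tgt :=
  (LinearMap.range (rMapZ src tgt)).mkQ

/-- The standard basis vector `λ_α` of `ℤ^{Q₁}`. -/
def lambZ {Q₁ : Type} [DecidableEq Q₁] (α : Q₁) : Q₁ → ℤ :=
  Pi.single α 1

/-! If `λ_{α₀} = n·m + r_*l` with `n` not a unit, then reducing `l` modulo `n` gives a vertex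
labelling which jumps by `1 ≠ 0` along `α₀` and is constant along every other arrow. The vertices
labelled like the target of `α₀` therefore form a set `I` whose boundary is `α₀` alone, and then
`λ_{α₀} = r_* 𝟙_I` already vanishes in `Λ⁻`. Moreover `I` and its complement both lie in
`S(Q₁ ∖ {α₀})`, so `{α₀} ∈ Φ_θ` would give `θ(𝟙) = θ(𝟙_I) + θ(𝟙_{Iᶜ}) > 0`. -/

/-- The arrow `α₀` is a bridge of the quiver, witnessed by the vertex set `I`: it is the only arrow
with exactly one endpoint in `I`, and it is required to point into `I`, which fixes the sign in
`r_* 𝟙_I = λ_{α₀}`. -/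
structure IsBridgeInto {Q₀ Q₁ : Type*} (src tgt : Q₁ → Q₀) (α₀ : Q₁) (I : Set Q₀) : Prop where
  tgt_mem : tgt α₀ ∈ I
  src_notMem : src α₀ ∉ I
  src_mem_iff_tgt_mem : ∀ α ≠ α₀, (src α ∈ I ↔ tgt α ∈ I)

theorem isBridgeInto_setOf_dvd_sub {Q₀ Q₁ R : Type*} [CommRing R] {src tgt : Q₁ → Q₀} {α₀ : Q₁}
    {n : R} (hn : ¬IsUnit n) {l : Q₀ → R} (h₀ : n ∣ l (tgt α₀) - l (src α₀) - 1)
    (h : ∀ α ≠ α₀, n ∣ l (tgt α) - l (src α)) :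
    IsBridgeInto src tgt α₀ {i | n ∣ l i - l (tgt α₀)} where
  tgt_mem := by simp only [Set.mem_ofPred_eq, sub_self, dvd_zero]
  src_notMem hsrc := by
    have h_neg_one : n ∣ -1 := by
      convert dvd_add hsrc h₀ using 1
      ring
    exact hn (isUnit_of_dvd_one (dvd_neg.mp h_neg_one))
  src_mem_iff_tgt_mem α hα := by
    have h_sub : n ∣ (l (tgt α) - l (tgt α₀)) - (l (src α) - l (tgt α₀)) := by
      rw [sub_sub_sub_cancel_right]
      exact h α hα
    exact (dvd_iff_dvd_of_dvd_sub h_sub).symm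

section Lattice

variable {Q₀ Q₁ : Type} [DecidableEq Q₁] {src tgt : Q₁ → Q₀} {α₀ : Q₁}

theorem rMapZ_indicator_one {I : Set Q₀} (hI : IsBridgeInto src tgt α₀ I) :
    rMapZ src tgt (I.indicator 1) = lambZ α₀ := by
  classical
  funext α
  change I.indicator 1 (tgt α) - I.indicator 1 (src α) = (lambZ α₀ : Q₁ → ℤ) α
  obtain rfl | hα := eq_or_ne α α₀
  · simp [lambZ, hI.tgt_mem, hI.src_notMem]
  · simp [lambZ, Set.indicator_apply, hI.src_mem_iff_tgt_mem α hα, hα]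

theorem exists_isBridgeInto_of_sMapZ_lambZ_eq_smul {n : ℤ} (hn : ¬IsUnit n)
    {μ : LamMinus src tgt} (h : sMapZ src tgt (lambZ α₀) = n • μ) :
    ∃ I : Set Q₀, IsBridgeInto src tgt α₀ I := by
  obtain ⟨m, rfl⟩ := Submodule.mkQ_surjective _ μ
  obtain ⟨l, hl⟩ : lambZ α₀ - n • m ∈ LinearMap.range (rMapZ src tgt) :=
    (Submodule.Quotient.eq _).mp h
  have hl_apply (α : Q₁) : l (tgt α) - l (src α) = (lambZ α₀ : Q₁ → ℤ) α - n * m α :=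
    congrFun hl α
  refine ⟨_, isBridgeInto_setOf_dvd_sub hn (l := l) ⟨-m α₀, ?_⟩ fun α hα => ⟨-m α, ?_⟩⟩
  · rw [hl_apply, lambZ, Pi.single_eq_same]
    ring
  · rw [hl_apply, lambZ, Pi.single_eq_of_ne hα]
    ring

theorem sMapZ_lambZ_eq_zero_iff_exists_isBridgeInto :
    sMapZ src tgt (lambZ α₀) = 0 ↔ ∃ I : Set Q₀, IsBridgeInto src tgt α₀ I := by
  constructor
  · intro h
    have h_smul : sMapZ src tgt (lambZ α₀) = (0 : ℤ) • 0 := by rw [h, smul_zero]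
    exact exists_isBridgeInto_of_sMapZ_lambZ_eq_smul not_isUnit_zero h_smul
  · rintro ⟨I, hI⟩
    exact (Submodule.Quotient.mk_eq_zero _).mpr ⟨_, rMapZ_indicator_one hI⟩

theorem sMapZ_lambZ_eq_zero_of_eq_smul {n : ℤ} (hn : ¬IsUnit n) {μ : LamMinus src tgt}
    (h : sMapZ src tgt (lambZ α₀) = n • μ) : sMapZ src tgt (lambZ α₀) = 0 :=
  sMapZ_lambZ_eq_zero_iff_exists_isBridgeInto.mpr (exists_isBridgeInto_of_sMapZ_lambZ_eq_smul hn h)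

end Lattice

section Stability

variable {Q₀ Q₁ : Type} [Fintype Q₀] [DecidableEq Q₀] {src tgt : Q₁ → Q₀} {θ : (Q₀ → ℤ) →ₗ[ℤ] ℤ}

theorem indVec_add_indVec_compl (I : Finset Q₀) : indVec I + indVec Iᶜ = 1 := by
  funext i
  by_cases hi : i ∈ I <;> simp [indVec, hi]

theorem StableArrowSet.map_one_pos {J : Finset Q₁} (hJ : StableArrowSet src tgt θ J)
    {I : Finset Q₀} (hI : ∀ α ∈ J, (src α ∈ I ↔ tgt α ∈ I)) (hne : I.Nonempty)
    (hne_univ : I ≠ Finset.univ) : 0 < θ 1 := by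
  have h_pos : 0 < θ (indVec I) := hJ I (fun α hα => (hI α hα).mp) hne hne_univ
  have h_compl_pos : 0 < θ (indVec Iᶜ) := by
    refine hJ Iᶜ (fun α hα => ?_) ?_ ?_
    · simpa only [Finset.mem_compl] using (not_congr (hI α hα)).mp
    · rwa [Finset.nonempty_iff_ne_empty, ne_eq, Finset.compl_eq_empty_iff]
    · rwa [ne_eq, Finset.compl_eq_univ_iff, ← ne_eq, ← Finset.nonempty_iff_ne_empty]
  rw [← indVec_add_indVec_compl I, map_add]
  exact add_pos h_pos h_compl_pos

variable [Fintype Q₁] [DecidableEq Q₁] {α₀ : Q₁}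

theorem IsBridgeInto.map_one_pos {I : Set Q₀} (hI : IsBridgeInto src tgt α₀ I)
    (h : {α₀} ∈ PhiTheta src tgt θ) : 0 < θ 1 := by
  classical
  refine StableArrowSet.map_one_pos h (I := I.toFinset)
    (fun α hα => ?_) ⟨tgt α₀, ?_⟩ fun h_univ => ?_
  · have hne : α ≠ α₀ := by simpa only [Finset.mem_compl, Finset.mem_singleton] using hα
    simpa only [Set.mem_toFinset] using hI.src_mem_iff_tgt_mem α hne
  · exact Set.mem_toFinset.mpr hI.tgt_mem
  · exact hI.src_notMem (Set.mem_toFinset.mp (h_univ ▸ Finset.mem_univ _))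

theorem sMapZ_lambZ_ne_zero_of_mem_phiTheta (hθ : θ 1 = 0) (h : {α₀} ∈ PhiTheta src tgt θ) :
    sMapZ src tgt (lambZ α₀) ≠ 0 := by
  intro h_zero
  obtain ⟨I, hI⟩ := sMapZ_lambZ_eq_zero_iff_exists_isBridgeInto.mp h_zero
  exact (hI.map_one_pos h).ne' hθ

end Stability

theorem stmt4_general {Q₀ Q₁ : Type} [DecidableEq Q₁] (src tgt : Q₁ → Q₀) (α₀ : Q₁) :
    ((∃ n : ℤ, 1 < n ∧ ∃ μ : LamMinus src tgt, sMapZ src tgt (lambZ α₀) = n • μ) →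
      sMapZ src tgt (lambZ α₀) = 0) ∧
    ∀ [Fintype Q₀] [DecidableEq Q₀] [Fintype Q₁] (θ : (Q₀ → ℤ) →ₗ[ℤ] ℤ), θ (fun _ => 1) = 0 →
      ({α₀} : Finset Q₁) ∈ PhiTheta src tgt θ →
        sMapZ src tgt (lambZ α₀) ≠ 0 ∧
        ¬∃ n : ℤ, 1 < n ∧ ∃ μ : LamMinus src tgt, sMapZ src tgt (lambZ α₀) = n • μ := by
  have zero_or_primitive :
      (∃ n : ℤ, 1 < n ∧ ∃ μ : LamMinus src tgt, sMapZ src tgt (lambZ α₀) = n • μ) →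
        sMapZ src tgt (lambZ α₀) = 0 := by
    rintro ⟨n, hn, μ, h⟩
    have hn_unit : ¬IsUnit n := by
      rw [Int.isUnit_iff]
      lia
    exact sMapZ_lambZ_eq_zero_of_eq_smul hn_unit h
  refine ⟨zero_or_primitive, fun θ hθ h => ?_⟩
  have h_ne : sMapZ src tgt (lambZ α₀) ≠ 0 := sMapZ_lambZ_ne_zero_of_mem_phiTheta hθ h
  exact ⟨h_ne, mt zero_or_primitive h_ne⟩

/-- For every arrow `α₀`, the element `s_*λ_{α₀} ∈ Λ⁻` is either
zero or primitive: if `s_*λ_{α₀} = n·μ` with `n > 1`, then `s_*λ_{α₀} = 0`.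
Consequently, if `{α₀} ∈ Φ_θ` then `s_*λ_{α₀}` is nonzero and is not a proper
integer multiple of a lattice point, i.e. it is the minimal lattice point on the
ray `σ⁻_{{α₀}}`. -/
theorem stmt4 {Q₀ Q₁ : Type} [Fintype Q₀] [DecidableEq Q₀] [Fintype Q₁] [DecidableEq Q₁]
    (src tgt : Q₁ → Q₀) (hconn : QuiverConnected src tgt)
    (θ : (Q₀ → ℤ) →ₗ[ℤ] ℤ) (hθ : θ (fun _ => 1) = 0) (α₀ : Q₁) :
    ((∃ n : ℤ, 1 < n ∧ ∃ μ : LamMinus src tgt, sMapZ src tgt (lambZ α₀) = n • μ) →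
      sMapZ src tgt (lambZ α₀) = 0) ∧
    (({α₀} : Finset Q₁) ∈ PhiTheta src tgt θ →
      sMapZ src tgt (lambZ α₀) ≠ 0 ∧
      ¬∃ n : ℤ, 1 < n ∧ ∃ μ : LamMinus src tgt, sMapZ src tgt (lambZ α₀) = n • μ) :=
  ⟨(stmt4_general src tgt α₀).1, (stmt4_general src tgt α₀).2 θ hθ⟩
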